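/- Let X = ∏_{i≥1} ℤ^i with the ∞-metric d(x,y) = Σ_{i=1}^∞ d_i(x_i, y_i), where d_i is the sup-metric on ℤ^i. Then the large scale structure on X induced by d does not have bounded scale measure at any scale: for every n ∈ ℕ there is no k ∈ ℕ such that every ball of radius n+1 is covered by k balls of radius n. -/

import Mathlib

open Set ENNReal

/-- The `∞`-metric `d(x,y) = Σᵢ maxₖ |xᵢₖ − yᵢₖ|` on `X = ∏_{i ≥ 1} ℤⁱ`. -/
noncomputable def dProd (x y : ∀ i : ℕ, Fin (i + 1) → ℤ) : ℝ≥0∞ :=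
  ∑' i : ℕ, ⨆ k : Fin (i + 1), ((x i k - y i k).natAbs : ℝ≥0∞)

/-- The ball of radius `r` about `x` for the above `∞`-metric. -/
def ballProd (x : ∀ i : ℕ, Fin (i + 1) → ℤ) (r : ℝ≥0∞) :
    Set (∀ i : ℕ, Fin (i + 1) → ℤ) :=
  {y | dProd x y ≤ r}

/-- Test points, supported in block `k`. -/
def testPt (n k : ℕ) (j : ℕ) : ∀ i : ℕ, Fin (i + 1) → ℤ :=
  fun i m => if i = k then (if m.val = j then (n + 1 : ℤ) else -(n + 1 : ℤ)) else 0

lemma testPt_mem (n k j : ℕ) : testPt n k j ∈ ballProd (fun _ _ => 0) (n + 1) := by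
  show dProd _ _ ≤ _
  unfold dProd
  rw [tsum_eq_single k]
  · refine iSup_le fun m => ?_
    have : (0 - testPt n k j k m).natAbs ≤ n + 1 := by
      simp only [testPt, if_true]
      split_ifs <;> omega
    exact_mod_cast this
  · intro i hi
    simp [testPt, hi]

lemma coord_le {c y : ∀ i : ℕ, Fin (i + 1) → ℤ} {n : ℕ} (h : y ∈ ballProd c n)
    (i : ℕ) (m : Fin (i + 1)) : (c i m - y i m).natAbs ≤ n := by
  have h1 : dProd c y ≤ n := h
  have h2 : (((c i m - y i m).natAbs : ℕ) : ℝ≥0∞) ≤ n :=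
    ((le_iSup (fun k : Fin (i + 1) => ((c i k - y i k).natAbs : ℝ≥0∞)) m).trans
      (ENNReal.le_tsum (f := fun i : ℕ =>
        ⨆ k : Fin (i + 1), ((c i k - y i k).natAbs : ℝ≥0∞)) i)).trans h1
  exact_mod_cast h2

/-- The space `∏_{i ≥ 1} ℤⁱ` with the `∞`-metric above fails bounded scale measure
at every scale: for every `n` there is no `k` such that every ball of radius `n+1`
is covered by `k` balls of radius `n`. -/
theorem prod_int_no_bsm :
    ∀ n : ℕ, ¬ ∃ k : ℕ, ∀ x : ∀ i : ℕ, Fin (i + 1) → ℤ,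
      ∃ F : Finset (∀ i : ℕ, Fin (i + 1) → ℤ),
        F.card ≤ k ∧ ballProd x (n + 1) ⊆ ⋃ c ∈ F, ballProd c n := by
  rintro n ⟨k, hk⟩
  obtain ⟨F, hF, hcov⟩ := hk (fun _ _ => 0)
  have hc : ∀ j : Fin (k + 1), ∃ c ∈ F, testPt n k j ∈ ballProd c n := by
    intro j
    have := hcov (testPt_mem n k j)
    simpa using this
  choose c hcF hcb using hc
  obtain ⟨a, -, b, -, hab, he⟩ := Finset.exists_ne_map_eq_of_card_lt_of_maps_to
    (s := (Finset.univ : Finset (Fin (k + 1)))) (t := F) (f := c)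
    (by simp; omega) (fun j _ => hcF j)
  have h1 := coord_le (hcb a) k a
  have h2 := coord_le (hcb b) k a
  rw [he] at h1
  have hne : a.val ≠ b.val := fun h => hab (Fin.ext h)
  simp only [testPt, if_true, if_neg hne] at h1 h2
  omega
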